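/- Fix d ≥ 3 and K > 0, set η := K/√(log d), and let m̃^φ(w) := g^φ(max_{1≤j≤d} w_j) with the piecewise linear g^φ, and ρ̃(w) := E[m̃^φ(w + Z)] with Z ∼ N(0, I_d). Let Ψ(w) := ∫_{−∞}^0 ∏_j Φ₁(t − w_j) dt. Then for every integer v ≥ 1, sup_{w∈ℝ^d} Σ_{j_1,…,j_v=1}^d sup_{‖y‖_∞≤η} |∂_{j_1…j_v} ρ̃(w+y)| ≤ 2φ sup_{w∈ℝ^d} Σ_{j_1,…,j_v=1}^d sup_{‖y‖_∞≤η} |∂_{j_1…j_v} Ψ(w+y)|. -/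

import Mathlib

open MeasureTheory ProbabilityTheory

/-- The standard normal density. -/
noncomputable def phi1 (t : ℝ) : ℝ := Real.exp (-t ^ 2 / 2) / Real.sqrt (2 * Real.pi)

/-- The standard normal cdf. -/
noncomputable def Phi1 (t : ℝ) : ℝ := ∫ u in Set.Iic t, phi1 u

/-- Ψ(w) := ∫_{−∞}^0 ∏_j Φ₁(t − w_j) dt. -/
noncomputable def Psi (d : ℕ) (w : Fin d → ℝ) : ℝ :=
  ∫ t in Set.Iic (0 : ℝ), ∏ j, Phi1 (t - w j)

/-- The piecewise-linear smoothing function g^φ. -/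
noncomputable def gphi (φ t : ℝ) : ℝ :=
  if t ≤ 0 then 1 else if t < 1 / φ then 1 - φ * t else 0

/-- The smoothed indicator of the negative orthant, m̃^φ(w) = g^φ(max_j w_j). -/
noncomputable def morth (d : ℕ) (φ : ℝ) (w : Fin d → ℝ) : ℝ := gphi φ (⨆ j, w j)

/-- ρ̃(w) = E[m̃^φ(w + Z)], Z ∼ N(0, I_d) with law γ. -/
noncomputable def rhoTil (d : ℕ) (φ : ℝ) (γ : Measure (Fin d → ℝ))
    (w : Fin d → ℝ) : ℝ :=
  ∫ z, morth d φ (w + z) ∂γ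

/-
The piecewise linear `g^φ` is a difference of negative parts, `g^φ(t) = φ ((t - 1/φ)⁻ - t⁻)`, and by
the layer cake formula `Ψ(w) = E[(max_j (w_j + Z_j))⁻]`. Hence `ρ̃ = φ (Ψ(· - (1/φ)𝟙) - Ψ)`, an
identity that can be differentiated, and the triangle inequality bounds the derivatives of `ρ̃` by
two translates of those of `Ψ`: this is the factor `2φ`.

Since `⨆` of an unbounded real family is `0` by convention, the derivatives of `Ψ` of order at least
one must be shown to be bounded. They are the integrals along a half-line of the diagonal of
derivatives of `x ↦ ∏ j, Φ₁(-x_j)`, in which at least one factor `Φ₁` is differentiated and decays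
faster than `(1 + x_j²)⁻¹`; the integral of `∑ j, (1 + x_j²)⁻¹` along the whole diagonal is `d π` at
every base point.
-/

open Filter Asymptotics
open scoped ContDiff Topology

section ParametricIntegral

variable {T E F : Type*} [MeasurableSpace T] {μ : Measure T}
  [NormedAddCommGroup E] [NormedSpace ℝ E] [NormedAddCommGroup F] [NormedSpace ℝ F]
  {f : E → T → F}

lemma hasFDerivAt_integral_iteratedFDeriv_of_dominated (hf : ∀ t, ContDiff ℝ ∞ (f · t))
    (hmeas : ∀ k x, AEStronglyMeasurable (fun t ↦ iteratedFDeriv ℝ k (f · t) x) μ)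
    (hint : ∀ x, Integrable (f x) μ)
    (hdom : ∀ k x, ∃ s ∈ 𝓝 x, ∃ b : T → ℝ, Integrable b μ ∧
      ∀ t, ∀ y ∈ s, ‖iteratedFDeriv ℝ (k + 1) (f · t) y‖ ≤ b t) (k : ℕ) (x : E) :
    HasFDerivAt (fun x ↦ ∫ t, iteratedFDeriv ℝ k (f · t) x ∂μ)
      (∫ t, fderiv ℝ (iteratedFDeriv ℝ k (f · t)) x ∂μ) x := by
  have integrable_iteratedFDeriv :
      Integrable (fun t ↦ iteratedFDeriv ℝ k (f · t) x) μ := by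
    cases k with
    | zero =>
      exact (hint x).norm.mono' (hmeas 0 x)
        (.of_forall fun t ↦ (norm_iteratedFDeriv_zero (𝕜 := ℝ)).le)
    | succ k =>
      obtain ⟨s, hs, b, hb, hle⟩ := hdom k x
      exact hb.mono' (hmeas _ x) (.of_forall fun t ↦ hle t x (mem_of_mem_nhds hs))
  obtain ⟨s, hs, b, hb, hle⟩ := hdom k x
  refine hasFDerivAt_integral_of_dominated_of_fderiv_le
    (F' := fun y t ↦ fderiv ℝ (iteratedFDeriv ℝ k (f · t)) y) (bound := b) hs
    (.of_forall (hmeas k)) integrable_iteratedFDeriv ?_ ?_ hb ?_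
  · exact (continuousMultilinearCurryLeftEquiv ℝ
      (fun _ : Fin (k + 1) ↦ E) F).continuous.comp_aestronglyMeasurable (hmeas (k + 1) x)
  · exact .of_forall fun t y hy ↦
      (norm_fderiv_iteratedFDeriv (𝕜 := ℝ) (f := (f · t))).trans_le (hle t y hy)
  · exact .of_forall fun t y _ ↦
      (((hf t).differentiable_iteratedFDeriv (mod_cast ENat.natCast_lt_top k)) y).hasFDerivAt

lemma iteratedFDeriv_integral_of_dominated (hf : ∀ t, ContDiff ℝ ∞ (f · t))
    (hmeas : ∀ k x, AEStronglyMeasurable (fun t ↦ iteratedFDeriv ℝ k (f · t) x) μ)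
    (hint : ∀ x, Integrable (f x) μ)
    (hdom : ∀ k x, ∃ s ∈ 𝓝 x, ∃ b : T → ℝ, Integrable b μ ∧
      ∀ t, ∀ y ∈ s, ‖iteratedFDeriv ℝ (k + 1) (f · t) y‖ ≤ b t) (k : ℕ) :
    iteratedFDeriv ℝ k (fun x ↦ ∫ t, f x t ∂μ) =
      fun x ↦ ∫ t, iteratedFDeriv ℝ k (f · t) x ∂μ := by
  induction k with
  | zero =>
    ext1 x
    exact ((continuousMultilinearCurryFin0 ℝ E F).symm.toContinuousLinearEquiv.integral_comp_comm
      (f x)).symm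
  | succ k ih =>
    ext1 x
    rw [iteratedFDeriv_succ_eq_comp_left, Function.comp_apply, ih,
      (hasFDerivAt_integral_iteratedFDeriv_of_dominated hf hmeas hint hdom k x).fderiv]
    exact (ContinuousLinearEquiv.integral_comp_comm (𝕜 := ℝ) (E := E →L[ℝ] E [×k]→L[ℝ] F)
      (F := E [×(k + 1)]→L[ℝ] F) (continuousMultilinearCurryLeftEquiv ℝ (fun _ ↦ E)
        F).symm.toContinuousLinearEquiv (μ := μ)
        fun t ↦ fderiv ℝ (iteratedFDeriv ℝ k (f · t)) x).symm

lemma contDiff_integral_of_dominated (hf : ∀ t, ContDiff ℝ ∞ (f · t))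
    (hmeas : ∀ k x, AEStronglyMeasurable (fun t ↦ iteratedFDeriv ℝ k (f · t) x) μ)
    (hint : ∀ x, Integrable (f x) μ)
    (hdom : ∀ k x, ∃ s ∈ 𝓝 x, ∃ b : T → ℝ, Integrable b μ ∧
      ∀ t, ∀ y ∈ s, ‖iteratedFDeriv ℝ (k + 1) (f · t) y‖ ≤ b t) :
    ContDiff ℝ ∞ (fun x ↦ ∫ t, f x t ∂μ) := by
  refine contDiff_of_differentiable_iteratedFDeriv fun k _ x ↦ ?_
  rw [iteratedFDeriv_integral_of_dominated hf hmeas hint hdom]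
  exact (hasFDerivAt_integral_iteratedFDeriv_of_dominated hf hmeas hint hdom k x).differentiableAt

end ParametricIntegral

section DerivDecay

variable {E E' : Type*} [NormedAddCommGroup E] [NormedSpace ℝ E]
  [NormedAddCommGroup E'] [NormedSpace ℝ E'] {q q' f g : E → ℝ}

/-- `f` is smooth and bounded, and each of its derivatives of order at least one is dominated by a
multiple of `q`. This is the form in which decay of the derivatives passes to products, where
undifferentiated factors are only bounded. -/
structure HasDerivDecay (q f : E → ℝ) : Prop where
  contDiff : ContDiff ℝ ∞ f
  isBigO_one : f =O[⊤] fun _ ↦ (1 : ℝ)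
  isBigO_iteratedFDeriv_succ : ∀ n : ℕ, iteratedFDeriv ℝ (n + 1) f =O[⊤] q

namespace HasDerivDecay

lemma mono (hf : HasDerivDecay q f) (h : q =O[⊤] q') : HasDerivDecay q' f :=
  ⟨hf.contDiff, hf.isBigO_one, fun n ↦ (hf.isBigO_iteratedFDeriv_succ n).trans h⟩

lemma isBigO_iteratedFDeriv_one (hq : q =O[⊤] fun _ ↦ (1 : ℝ)) (hf : HasDerivDecay q f) (n : ℕ) :
    iteratedFDeriv ℝ n f =O[⊤] fun _ ↦ (1 : ℝ) := by
  cases n with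
  | zero => exact (isBigO_of_le _ fun x ↦ norm_iteratedFDeriv_zero.le).trans hf.isBigO_one
  | succ n => exact (hf.isBigO_iteratedFDeriv_succ n).trans hq

lemma one : HasDerivDecay q fun _ ↦ 1 where
  contDiff := contDiff_const
  isBigO_one := isBigO_refl _ _
  isBigO_iteratedFDeriv_succ n := by
    rw [iteratedFDeriv_succ_const]
    exact isBigO_zero _ _

lemma mul (hq : q =O[⊤] fun _ ↦ (1 : ℝ)) (hf : HasDerivDecay q f) (hg : HasDerivDecay q g) :
    HasDerivDecay q fun x ↦ f x * g x where
  contDiff := hf.contDiff.mul hg.contDiff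
  isBigO_one := by simpa only [mul_one] using hf.isBigO_one.mul hg.isBigO_one
  isBigO_iteratedFDeriv_succ n := by
    have leibniz : iteratedFDeriv ℝ (n + 1) (fun x ↦ f x * g x) =O[⊤]
        fun x ↦ ∑ i ∈ Finset.range (n + 2), ((n + 1).choose i : ℝ) *
          ‖iteratedFDeriv ℝ i f x‖ * ‖iteratedFDeriv ℝ (n + 1 - i) g x‖ :=
      isBigO_of_le _ fun x ↦ (norm_iteratedFDeriv_mul_le hf.contDiff hg.contDiff x
        (mod_cast le_top)).trans (le_abs_self _)
    refine leibniz.trans (IsBigO.fun_sum fun i _ ↦ ?_)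
    simp only [mul_assoc]
    refine IsBigO.const_mul_left ?_ _
    -- At least one of the two factors carries a derivative.
    cases i with
    | zero =>
      simpa only [one_mul, Nat.sub_zero] using! ((hf.isBigO_iteratedFDeriv_one hq 0).norm_left.mul
        (hg.isBigO_iteratedFDeriv_succ n).norm_left)
    | succ i =>
      simpa only [mul_one] using! ((hf.isBigO_iteratedFDeriv_succ i).norm_left.mul
        (hg.isBigO_iteratedFDeriv_one hq _).norm_left)

lemma prod {ι : Type*} (hq : q =O[⊤] fun _ ↦ (1 : ℝ)) {f : ι → E → ℝ} (s : Finset ι)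
    (hf : ∀ i ∈ s, HasDerivDecay q (f i)) : HasDerivDecay q fun x ↦ ∏ i ∈ s, f i x := by
  classical
  induction s using Finset.induction_on with
  | empty => exact one
  | insert i s hi ih =>
    simp only [Finset.prod_insert hi]
    exact mul hq (hf i (Finset.mem_insert_self i s))
      (ih fun j hj ↦ hf j (Finset.mem_insert_of_mem hj))

lemma comp_continuousLinearMap (hf : HasDerivDecay q f) (L : E' →L[ℝ] E) :
    HasDerivDecay (q ∘ L) (f ∘ L) where
  contDiff := hf.contDiff.comp L.contDiff
  isBigO_one := hf.isBigO_one.comp_tendsto tendsto_top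
  isBigO_iteratedFDeriv_succ n := by
    refine IsBigO.trans (.of_bound (‖L‖ ^ (n + 1)) ?_)
      ((hf.isBigO_iteratedFDeriv_succ n).comp_tendsto tendsto_top)
    filter_upwards with x
    rw [L.iteratedFDeriv_comp_right hf.contDiff x (mod_cast le_top), Function.comp_apply, mul_comm]
    simpa only [Finset.prod_const, Finset.card_univ, Fintype.card_fin] using
      ContinuousMultilinearMap.norm_compContinuousLinearMap_le (iteratedFDeriv ℝ (n + 1) f (L x))
        fun _ ↦ L

end HasDerivDecay

end DerivDecay

section StandardNormal

lemma hasDerivAt_integral_Iic {F : Type*} [NormedAddCommGroup F] [NormedSpace ℝ F]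
    [CompleteSpace F] {f : ℝ → F} (hf : Integrable f) (hcont : Continuous f) (x : ℝ) :
    HasDerivAt (fun s ↦ ∫ u in Set.Iic s, f u) (f x) x := by
  have split_at_zero : (fun s ↦ ∫ u in Set.Iic s, f u) =
      fun s ↦ (∫ u in Set.Iic 0, f u) + ∫ u in (0 : ℝ)..s, f u := by
    ext1 s
    rw [← intervalIntegral.integral_Iic_sub_Iic hf.integrableOn hf.integrableOn, add_sub_cancel]
  rw [split_at_zero]
  exact (hcont.integral_hasStrictDerivAt 0 x).hasDerivAt.const_add _

lemma phi1_eq_gaussianPDFReal : phi1 = gaussianPDFReal 0 1 := by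
  ext t
  simp [phi1, gaussianPDFReal, div_eq_inv_mul]

lemma phi1_eq_mul_exp : phi1 = fun t ↦ (√(2 * Real.pi))⁻¹ * Real.exp (-(t ^ 2 / 2)) := by
  ext t
  simp only [phi1, div_eq_inv_mul, mul_neg]

lemma contDiff_phi1 : ContDiff ℝ ∞ phi1 := by
  unfold phi1
  fun_prop

lemma Phi1_eq_measureReal_Iic (t : ℝ) : Phi1 t = (gaussianReal 0 1).real (Set.Iic t) := by
  rw [measureReal_def, gaussianReal_apply_eq_integral 0 one_ne_zero, ← phi1_eq_gaussianPDFReal]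
  exact (ENNReal.toReal_ofReal (integral_nonneg fun u ↦ by unfold phi1; positivity)).symm

lemma Phi1_nonneg (t : ℝ) : 0 ≤ Phi1 t := by
  rw [Phi1_eq_measureReal_Iic]
  exact measureReal_nonneg

lemma Phi1_le_one (t : ℝ) : Phi1 t ≤ 1 := by
  rw [Phi1_eq_measureReal_Iic]
  exact measureReal_le_one

lemma Phi1_le_exp (t : ℝ) : Phi1 t ≤ Real.exp (t + 1 / 2) := by
  have chernoff := measure_le_le_exp_mul_mgf (X := id) (μ := gaussianReal 0 1) (t := -1) t
    (by norm_num) (integrable_exp_mul_gaussianReal (-1))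
  rw [mgf_id_gaussianReal, ← Real.exp_add] at chernoff
  rw [Phi1_eq_measureReal_Iic]
  simpa using! chernoff

lemma hasDerivAt_Phi1 (t : ℝ) : HasDerivAt Phi1 (phi1 t) t :=
  hasDerivAt_integral_Iic (phi1_eq_gaussianPDFReal ▸ integrable_gaussianPDFReal 0 1)
    contDiff_phi1.continuous t

lemma deriv_Phi1 : deriv Phi1 = phi1 := funext fun t ↦ (hasDerivAt_Phi1 t).deriv

lemma contDiff_Phi1 : ContDiff ℝ ∞ Phi1 := by
  rw [contDiff_infty_iff_deriv, deriv_Phi1]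
  exact ⟨fun t ↦ (hasDerivAt_Phi1 t).differentiableAt, contDiff_phi1⟩

lemma abs_pow_mul_exp_neg_sq_div_two_le (n : ℕ) (x : ℝ) :
    |x| ^ n * Real.exp (-(x ^ 2 / 2)) ≤ n.factorial * Real.exp (1 / 2) := by
  have pow_le : |x| ^ n ≤ n.factorial * Real.exp |x| := by
    rw [← div_le_iff₀' (by positivity)]
    exact Real.pow_div_factorial_le_exp |x| (abs_nonneg x) n
  calc |x| ^ n * Real.exp (-(x ^ 2 / 2))
      ≤ n.factorial * Real.exp |x| * Real.exp (-(x ^ 2 / 2)) := by gcongr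
    _ = n.factorial * Real.exp (|x| - x ^ 2 / 2) := by
      rw [mul_assoc, ← Real.exp_add, ← sub_eq_add_neg]
    _ ≤ n.factorial * Real.exp (1 / 2) := by
      gcongr
      linarith [sq_nonneg (|x| - 1), sq_abs x]

lemma isBigO_eval_mul_exp_neg_sq_div_two (p : Polynomial ℝ) :
    (fun x ↦ p.eval x * Real.exp (-(x ^ 2 / 2))) =O[⊤] fun _ ↦ (1 : ℝ) := by
  induction p using Polynomial.induction_on' with
  | add p q hp hq => simpa only [Polynomial.eval_add, add_mul] using hp.add hq
  | monomial n a =>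
    simp only [Polynomial.eval_monomial, mul_assoc]
    refine IsBigO.const_mul_left (isBigO_top.2 ⟨n.factorial * Real.exp (1 / 2), fun x ↦ ?_⟩) a
    simpa using abs_pow_mul_exp_neg_sq_div_two_le n x

lemma isBigO_iteratedDeriv_phi1 (n : ℕ) :
    iteratedDeriv n phi1 =O[⊤] fun x ↦ (1 + x ^ 2)⁻¹ := by
  let He : Polynomial ℝ := (Polynomial.hermite n).map (algebraMap ℤ ℝ)
  have rodrigues : iteratedDeriv n phi1 = fun x ↦ ((√(2 * Real.pi))⁻¹ * (-1) ^ n) *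
      ((((1 + Polynomial.X ^ 2) * He).eval x * Real.exp (-(x ^ 2 / 2))) * (1 + x ^ 2)⁻¹) := by
    ext1 x
    have one_add_sq_ne_zero : 1 + x ^ 2 ≠ 0 := by positivity
    rw [phi1_eq_mul_exp, iteratedDeriv_const_mul_field, iteratedDeriv_eq_iterate,
      Polynomial.deriv_gaussian_eq_hermite_mul_gaussian]
    simp only [He, Polynomial.eval_mul, Polynomial.eval_add, Polynomial.eval_one,
      Polynomial.eval_pow, Polynomial.eval_X, Polynomial.eval_map_algebraMap]
    field_simp
  rw [rodrigues]
  refine IsBigO.const_mul_left ?_ _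
  simpa only [one_mul] using (isBigO_eval_mul_exp_neg_sq_div_two _).mul (isBigO_refl _ ⊤)

lemma hasDerivDecay_Phi1 : HasDerivDecay (fun x ↦ (1 + x ^ 2)⁻¹) Phi1 where
  contDiff := contDiff_Phi1
  isBigO_one := isBigO_of_le _ fun t ↦ by
    simpa only [Real.norm_eq_abs, abs_of_nonneg (Phi1_nonneg t), norm_one] using Phi1_le_one t
  isBigO_iteratedFDeriv_succ n := by
    refine (isBigO_of_le _ fun x ↦ ?_).trans (isBigO_iteratedDeriv_phi1 n)
    rw [norm_iteratedFDeriv_eq_norm_iteratedDeriv, iteratedDeriv_succ', deriv_Phi1]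

end StandardNormal

section CauchyMajorant

variable {ι : Type*} [Fintype ι]

/-- The majorant used to differentiate under the integral sign: it is integrable along the
diagonal, with an integral that does not depend on the base point, and it varies by at most a
factor `3` on balls of radius one. -/
noncomputable def cauchyMajorant (x : ι → ℝ) : ℝ := ∑ j, (1 + x j ^ 2)⁻¹

lemma cauchyMajorant_nonneg (x : ι → ℝ) : 0 ≤ cauchyMajorant x :=
  Finset.sum_nonneg fun _ _ ↦ by positivity

lemma inv_one_add_sq_le_cauchyMajorant (x : ι → ℝ) (j : ι) :
    (1 + x j ^ 2)⁻¹ ≤ cauchyMajorant x :=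
  Finset.single_le_sum (f := fun j ↦ (1 + x j ^ 2)⁻¹) (fun _ _ ↦ by positivity)
    (Finset.mem_univ j)

lemma cauchyMajorant_isBigO_one : (cauchyMajorant (ι := ι)) =O[⊤] fun _ ↦ (1 : ℝ) := by
  refine IsBigO.fun_sum fun j _ ↦ isBigO_of_le _ fun x ↦ ?_
  rw [norm_one, norm_inv, Real.norm_of_nonneg (by positivity)]
  exact inv_le_one_of_one_le₀ (le_add_of_nonneg_right (sq_nonneg _))

lemma inv_one_add_sq_le_three_mul {s t : ℝ} (h : |s - t| ≤ 1) :
    (1 + s ^ 2)⁻¹ ≤ 3 * (1 + t ^ 2)⁻¹ := by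
  rw [← div_eq_mul_inv, ← one_div, div_le_div_iff₀ (by positivity) (by positivity)]
  have sq_sub_le_one : (s - t) ^ 2 ≤ 1 := (sq_le_one_iff_abs_le_one _).2 h
  nlinarith [sq_nonneg (2 * s - t)]

lemma cauchyMajorant_le_three_mul {x y : ι → ℝ} (h : ‖x - y‖ ≤ 1) :
    cauchyMajorant x ≤ 3 * cauchyMajorant y := by
  rw [cauchyMajorant, cauchyMajorant, Finset.mul_sum]
  exact Finset.sum_le_sum fun j _ ↦
    inv_one_add_sq_le_three_mul ((norm_le_pi_norm (x - y) j).trans h)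

lemma integrable_cauchyMajorant_sub (w : ι → ℝ) :
    Integrable fun t : ℝ ↦ cauchyMajorant (w - fun _ ↦ t) :=
  integrable_finsetSum _ fun j _ ↦ integrable_inv_one_add_sq.comp_sub_left (w j)

lemma integral_cauchyMajorant_sub (w : ι → ℝ) :
    ∫ t : ℝ, cauchyMajorant (w - fun _ ↦ t) = Fintype.card ι * Real.pi := by
  simp only [cauchyMajorant, Pi.sub_apply]
  rw [integral_finsetSum _ fun j _ ↦ integrable_inv_one_add_sq.comp_sub_left (w j)]
  simp only [integral_sub_left_eq_self (fun s : ℝ ↦ (1 + s ^ 2)⁻¹),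
    integral_univ_inv_one_add_sq, Finset.sum_const, Finset.card_univ, nsmul_eq_mul]

end CauchyMajorant

section OrthantProb

variable {ι : Type*} [Fintype ι]

/-- The probability that `x + Z` lies in the negative orthant, for `Z` a standard Gaussian vector;
`Ψ` is its integral along a half-line of the diagonal. -/
noncomputable def orthantProb (x : ι → ℝ) : ℝ := ∏ j, Phi1 (-x j)

lemma orthantProb_nonneg (x : ι → ℝ) : 0 ≤ orthantProb x :=
  Finset.prod_nonneg fun _ _ ↦ Phi1_nonneg _

lemma orthantProb_le_Phi1 (x : ι → ℝ) (j : ι) : orthantProb x ≤ Phi1 (-x j) := by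
  classical
  rw [orthantProb, ← Finset.mul_prod_erase _ _ (Finset.mem_univ j)]
  exact mul_le_of_le_one_right (Phi1_nonneg _)
    (Finset.prod_le_one (fun _ _ ↦ Phi1_nonneg _) fun _ _ ↦ Phi1_le_one _)

lemma hasDerivDecay_orthantProb :
    HasDerivDecay cauchyMajorant (orthantProb : (ι → ℝ) → ℝ) := by
  refine HasDerivDecay.prod cauchyMajorant_isBigO_one _ fun j _ ↦ ?_
  let negProj : (ι → ℝ) →L[ℝ] ℝ := -ContinuousLinearMap.proj j
  refine (hasDerivDecay_Phi1.comp_continuousLinearMap negProj).mono (isBigO_of_le _ fun x ↦ ?_)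
  have neg_sq : negProj x ^ 2 = x j ^ 2 := neg_sq (x j)
  rw [Function.comp_apply, neg_sq, Real.norm_of_nonneg (by positivity),
    Real.norm_of_nonneg (cauchyMajorant_nonneg x)]
  exact inv_one_add_sq_le_cauchyMajorant x j

lemma integrableOn_orthantProb_sub [Nonempty ι] (w : ι → ℝ) :
    IntegrableOn (fun t : ℝ ↦ orthantProb (w - fun _ ↦ t)) (Set.Iic 0) := by
  obtain ⟨j⟩ := ‹Nonempty ι›
  refine ((integrableOn_exp_Iic 0).const_mul (Real.exp (1 / 2 - w j))).mono'
    (hasDerivDecay_orthantProb.contDiff.continuous.comp (by fun_prop)).aestronglyMeasurable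
    (.of_forall fun t ↦ ?_)
  calc ‖orthantProb (w - fun _ ↦ t)‖
      = orthantProb (w - fun _ ↦ t) := Real.norm_of_nonneg (orthantProb_nonneg _)
    _ ≤ Phi1 (-(w j - t)) := orthantProb_le_Phi1 _ j
    _ ≤ Real.exp (-(w j - t) + 1 / 2) := Phi1_le_exp _
    _ = Real.exp (1 / 2 - w j) * Real.exp t := by rw [← Real.exp_add]; ring_nf

lemma measureReal_pi_gaussianReal_iSup_le [Nonempty ι] (w : ι → ℝ) (t : ℝ) :
    (Measure.pi fun _ : ι ↦ gaussianReal 0 1).real {z | ⨆ j, (w + z) j ≤ t} =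
      orthantProb (w - fun _ ↦ t) := by
  have eq_box : {z : ι → ℝ | ⨆ j, (w + z) j ≤ t} = Set.univ.pi fun j ↦ Set.Iic (t - w j) := by
    ext z
    simp only [Set.mem_ofPred_eq, ciSup_le_iff (Set.finite_range _).bddAbove, Set.mem_pi,
      Set.mem_univ, true_imp_iff, Set.mem_Iic, Pi.add_apply, le_sub_iff_add_le']
  rw [eq_box, measureReal_def, Measure.pi_pi, ENNReal.toReal_prod, orthantProb]
  simp only [← measureReal_def, ← Phi1_eq_measureReal_Iic, Pi.sub_apply, neg_sub]

end OrthantProb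

section Psi

variable {d : ℕ}

lemma Psi_eq_integral_orthantProb (w : Fin d → ℝ) :
    Psi d w = ∫ t in Set.Iic (0 : ℝ), orthantProb (w - fun _ ↦ t) := by
  simp only [Psi, orthantProb, Pi.sub_apply, neg_sub]

lemma continuous_iteratedFDeriv_orthantProb_sub (k : ℕ) (w : Fin d → ℝ) :
    Continuous fun t : ℝ ↦
      iteratedFDeriv ℝ k (fun x ↦ orthantProb (x - fun _ : Fin d ↦ t)) w := by
  simp only [iteratedFDeriv_comp_sub]
  exact (hasDerivDecay_orthantProb.contDiff.continuous_iteratedFDeriv (mod_cast le_top)).comp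
    (by fun_prop)

lemma exists_norm_iteratedFDeriv_orthantProb_sub_le (k : ℕ) : ∃ C : ℝ, ∀ (t : ℝ) (w : Fin d → ℝ),
    ‖iteratedFDeriv ℝ (k + 1) (fun x ↦ orthantProb (x - fun _ : Fin d ↦ t)) w‖ ≤
      C * cauchyMajorant (w - fun _ ↦ t) := by
  obtain ⟨C, hC⟩ :=
    isBigO_top.1 ((hasDerivDecay_orthantProb (ι := Fin d)).isBigO_iteratedFDeriv_succ k)
  refine ⟨C, fun t w ↦ ?_⟩
  rw [iteratedFDeriv_comp_sub]
  exact (hC _).trans_eq (by rw [Real.norm_of_nonneg (cauchyMajorant_nonneg _)])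

lemma exists_dominating_iteratedFDeriv_orthantProb_sub (k : ℕ) (w : Fin d → ℝ) :
    ∃ s ∈ 𝓝 w, ∃ b : ℝ → ℝ, IntegrableOn b (Set.Iic 0) ∧ ∀ t, ∀ y ∈ s,
      ‖iteratedFDeriv ℝ (k + 1) (fun x ↦ orthantProb (x - fun _ : Fin d ↦ t)) y‖ ≤ b t := by
  obtain ⟨C, hC⟩ := exists_norm_iteratedFDeriv_orthantProb_sub_le (d := d) k
  refine ⟨Metric.closedBall w 1, Metric.closedBall_mem_nhds w one_pos,
    fun t ↦ |C| * (3 * cauchyMajorant (w - fun _ ↦ t)),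
    (((integrable_cauchyMajorant_sub w).const_mul 3).const_mul |C|).integrableOn,
    fun t y hy ↦ (hC t y).trans (mul_le_mul (le_abs_self C) (cauchyMajorant_le_three_mul ?_)
      (cauchyMajorant_nonneg _) (abs_nonneg C))⟩
  rw [sub_sub_sub_cancel_right]
  exact mem_closedBall_iff_norm.1 hy

variable [Nonempty (Fin d)]

lemma contDiff_Psi : ContDiff ℝ ∞ (Psi d) := by
  rw [funext Psi_eq_integral_orthantProb]
  exact contDiff_integral_of_dominated
    (fun t ↦ hasDerivDecay_orthantProb.contDiff.comp (contDiff_id.sub contDiff_const))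
    (fun k w ↦ (continuous_iteratedFDeriv_orthantProb_sub k w).aestronglyMeasurable)
    integrableOn_orthantProb_sub exists_dominating_iteratedFDeriv_orthantProb_sub

lemma iteratedFDeriv_Psi (k : ℕ) (w : Fin d → ℝ) :
    iteratedFDeriv ℝ k (Psi d) w = ∫ t in Set.Iic (0 : ℝ),
      iteratedFDeriv ℝ k (fun x ↦ orthantProb (x - fun _ : Fin d ↦ t)) w := by
  rw [funext Psi_eq_integral_orthantProb]
  exact congrFun (iteratedFDeriv_integral_of_dominated
    (fun t ↦ hasDerivDecay_orthantProb.contDiff.comp (contDiff_id.sub contDiff_const))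
    (fun k w ↦ (continuous_iteratedFDeriv_orthantProb_sub k w).aestronglyMeasurable)
    integrableOn_orthantProb_sub exists_dominating_iteratedFDeriv_orthantProb_sub k) w

lemma exists_norm_iteratedFDeriv_succ_Psi_le (n : ℕ) :
    ∃ C : ℝ, ∀ w, ‖iteratedFDeriv ℝ (n + 1) (Psi d) w‖ ≤ C := by
  obtain ⟨C, hC⟩ := exists_norm_iteratedFDeriv_orthantProb_sub_le (d := d) n
  refine ⟨|C| * (d * Real.pi), fun w ↦ ?_⟩
  have integrable_majorant : Integrable fun t : ℝ ↦ |C| * cauchyMajorant (w - fun _ ↦ t) :=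
    (integrable_cauchyMajorant_sub w).const_mul |C|
  calc ‖iteratedFDeriv ℝ (n + 1) (Psi d) w‖
      ≤ ∫ t in Set.Iic (0 : ℝ), |C| * cauchyMajorant (w - fun _ ↦ t) := by
        rw [iteratedFDeriv_Psi]
        refine norm_integral_le_of_norm_le integrable_majorant.integrableOn
          (.of_forall fun t ↦ (hC t w).trans ?_)
        exact mul_le_mul_of_nonneg_right (le_abs_self C) (cauchyMajorant_nonneg _)
    _ ≤ ∫ t : ℝ, |C| * cauchyMajorant (w - fun _ ↦ t) :=
        setIntegral_le_integral integrable_majorant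
          (.of_forall fun t ↦ mul_nonneg (abs_nonneg C) (cauchyMajorant_nonneg _))
    _ = |C| * (d * Real.pi) := by
        rw [integral_const_mul, integral_cauchyMajorant_sub, Fintype.card_fin]

lemma exists_abs_iteratedFDeriv_Psi_single_le {v : ℕ} (hv : 1 ≤ v) :
    ∃ C : ℝ, ∀ (J : Fin v → Fin d) (w : Fin d → ℝ),
      |iteratedFDeriv ℝ v (Psi d) w fun i ↦ Pi.single (J i) 1| ≤ C := by
  obtain ⟨n, rfl⟩ := Nat.exists_eq_add_of_le' hv
  obtain ⟨C, hC⟩ := exists_norm_iteratedFDeriv_succ_Psi_le (d := d) n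
  refine ⟨C, fun J w ↦ ?_⟩
  calc |iteratedFDeriv ℝ (n + 1) (Psi d) w fun i ↦ Pi.single (J i) 1|
      ≤ ‖iteratedFDeriv ℝ (n + 1) (Psi d) w‖ * ∏ i, ‖(Pi.single (J i) 1 : Fin d → ℝ)‖ :=
        (iteratedFDeriv ℝ (n + 1) (Psi d) w).le_opNorm _
    _ = ‖iteratedFDeriv ℝ (n + 1) (Psi d) w‖ := by
        simp only [Pi.norm_single, norm_one, Finset.prod_const_one, mul_one]
    _ ≤ C := hC w

end Psi

section NegPart

lemma gphi_eq_mul_sub_negPart {φ : ℝ} (hφ : 0 < φ) (t : ℝ) :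
    gphi φ t = φ * ((t - 1 / φ)⁻ - t⁻) := by
  have inv_pos : 0 < 1 / φ := by positivity
  have mul_sub_inv : φ * (t - 1 / φ) = φ * t - 1 := by field_simp
  rw [gphi]
  split_ifs with h0 h1
  · rw [negPart_eq_neg.2 h0, negPart_eq_neg.2 (by linarith)]
    linarith
  · rw [negPart_eq_zero.2 (not_le.1 h0).le, negPart_eq_neg.2 (by linarith)]
    linarith
  · rw [negPart_eq_zero.2 (not_le.1 h0).le, negPart_eq_zero.2 (by linarith), sub_zero, mul_zero]

variable {ι : Type*} [Finite ι]

lemma negPart_iSup_le_abs (x : ι → ℝ) (j : ι) : (⨆ i, x i)⁻ ≤ |x j| := by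
  have le_iSup : x j ≤ ⨆ i, x i := le_ciSup (Set.finite_range x).bddAbove j
  exact (negPart_anti le_iSup).trans (sup_le (neg_le_abs _) (abs_nonneg _))

lemma iSup_sub_const_apply [Nonempty ι] (x : ι → ℝ) (c : ℝ) :
    ⨆ j, (x - fun _ ↦ c : ι → ℝ) j = (⨆ j, x j) - c :=
  (ciSup_sub (Set.finite_range x).bddAbove c).symm

lemma integrable_negPart_iSup_add {γ : Measure (ι → ℝ)} [IsFiniteMeasure γ] {j : ι}
    (hγ : Integrable (fun z ↦ z j) γ) (w : ι → ℝ) :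
    Integrable (fun z ↦ (⨆ i, (w + z) i)⁻) γ := by
  have meas : Measurable fun z : ι → ℝ ↦ (⨆ i, (w + z) i)⁻ :=
    (Measurable.iSup fun i ↦ (measurable_pi_apply i).const_add (w i)).negPart
  refine ((integrable_const (w j)).add hγ).abs.mono' meas.aestronglyMeasurable
    (.of_forall fun z ↦ ?_)
  rw [Real.norm_of_nonneg (negPart_nonneg _)]
  exact negPart_iSup_le_abs (w + z) j

lemma rhoTil_eq_mul_sub_integral_negPart {d : ℕ} {φ : ℝ} (hφ : 0 < φ)
    {γ : Measure (Fin d → ℝ)} [IsFiniteMeasure γ] {j : Fin d} (hγ : Integrable (fun z ↦ z j) γ)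
    (w : Fin d → ℝ) :
    rhoTil d φ γ w = φ * (∫ z, (⨆ j, ((w - fun _ ↦ 1 / φ : Fin d → ℝ) + z) j)⁻ ∂γ -
      ∫ z, (⨆ j, (w + z) j)⁻ ∂γ) := by
  have : Nonempty (Fin d) := ⟨j⟩
  rw [← integral_sub (integrable_negPart_iSup_add hγ _) (integrable_negPart_iSup_add hγ _),
    ← integral_const_mul, rhoTil]
  simp only [morth, gphi_eq_mul_sub_negPart hφ, ← iSup_sub_const_apply, add_sub_right_comm]

lemma integral_negPart_iSup_add_pi_gaussianReal {d : ℕ} [Nonempty (Fin d)] (w : Fin d → ℝ) :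
    ∫ z, (⨆ j, (w + z) j)⁻ ∂(Measure.pi fun _ : Fin d ↦ gaussianReal 0 1) = Psi d w := by
  let γ : Measure (Fin d → ℝ) := Measure.pi fun _ ↦ gaussianReal 0 1
  obtain ⟨j⟩ := ‹Nonempty (Fin d)›
  have integrable_eval : Integrable (fun z : Fin d → ℝ ↦ z j) γ :=
    integrable_comp_eval (f := id) (i := j) (IsGaussian.integrable_id)
  have le_negPart_iff {s : ℝ} (hs : 0 < s) (m : ℝ) : s ≤ m⁻ ↔ m ≤ -s := by
    rw [negPart_def, le_sup_iff, or_iff_left hs.not_ge, le_neg]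
  calc ∫ z, (⨆ j, (w + z) j)⁻ ∂γ
      = ∫ s in Set.Ioi 0, γ.real {z | s ≤ (⨆ j, (w + z) j)⁻} :=
        (integrable_negPart_iSup_add integrable_eval w).integral_eq_integral_meas_le
          (.of_forall fun z ↦ negPart_nonneg _)
    _ = ∫ s in Set.Ioi 0, orthantProb (w - fun _ ↦ -s) :=
        setIntegral_congr_fun measurableSet_Ioi fun s hs ↦ by
          simp only [le_negPart_iff hs, ← measureReal_pi_gaussianReal_iSup_le, γ]
    _ = ∫ t in Set.Iic 0, orthantProb (w - fun _ ↦ t) := by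
        rw [integral_comp_neg_Ioi 0 fun t ↦ orthantProb (w - fun _ ↦ t), neg_zero]
    _ = Psi d w := (Psi_eq_integral_orthantProb w).symm

lemma rhoTil_pi_gaussianReal {d : ℕ} [Nonempty (Fin d)] {φ : ℝ} (hφ : 0 < φ) :
    rhoTil d φ (Measure.pi fun _ ↦ gaussianReal 0 1) =
      fun w ↦ φ • (Psi d (w - fun _ ↦ 1 / φ) - Psi d w) := by
  obtain ⟨j⟩ := ‹Nonempty (Fin d)›
  ext w
  rw [rhoTil_eq_mul_sub_integral_negPart hφ (j := j)
      (integrable_comp_eval (f := id) IsGaussian.integrable_id),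
    integral_negPart_iSup_add_pi_gaussianReal, integral_negPart_iSup_add_pi_gaussianReal,
    smul_eq_mul]

lemma iteratedFDeriv_rhoTil_pi_gaussianReal {d : ℕ} [Nonempty (Fin d)] {φ : ℝ} (hφ : 0 < φ)
    (v : ℕ) (x : Fin d → ℝ) :
    iteratedFDeriv ℝ v (rhoTil d φ (Measure.pi fun _ ↦ gaussianReal 0 1)) x =
      φ • (iteratedFDeriv ℝ v (Psi d) (x - fun _ ↦ 1 / φ) - iteratedFDeriv ℝ v (Psi d) x) := by
  have smooth : ContDiff ℝ v (Psi d) := contDiff_Psi.of_le (mod_cast le_top)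
  have smooth_translate : ContDiff ℝ v fun w ↦ Psi d (w - fun _ ↦ 1 / φ) :=
    smooth.comp (contDiff_id.sub contDiff_const)
  rw [rhoTil_pi_gaussianReal hφ,
    iteratedFDeriv_const_smul_apply' (smooth_translate.sub smooth).contDiffAt,
    fun_iteratedFDeriv_sub_apply smooth_translate.contDiffAt smooth.contDiffAt,
    iteratedFDeriv_comp_sub]

end NegPart

section GaussianLaw

variable {ι : Type*} [Fintype ι] {γ : Measure (ι → ℝ)}

lemma eq_pi_map_eval_of_isGaussian [IsGaussian γ]
    (hcov : Pairwise fun i j ↦ cov[fun z ↦ z i, fun z ↦ z j; γ] = 0) :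
    γ = Measure.pi fun i ↦ γ.map fun z ↦ z i := by
  have law : HasGaussianLaw (fun (z : ι → ℝ) i ↦ z i) γ :=
    ⟨by simpa only [Measure.map_id'] using ‹IsGaussian γ›⟩
  have indep : iIndepFun (fun i (z : ι → ℝ) ↦ z i) γ :=
    law.iIndepFun_of_covariance_eq_zero fun i j hij ↦ hcov hij
  have map_eq_pi := (iIndepFun_iff_map_fun_eq_pi_map
    fun i ↦ (measurable_pi_apply i).aemeasurable).1 indep
  rwa [Measure.map_id'] at map_eq_pi

lemma eq_gaussianReal_zero_one_of_integral_sq_eq_one {r : NNReal}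
    (h : ∫ x, x ^ 2 ∂gaussianReal 0 r = 1) : r = 1 := by
  have var_eq : Var[id; gaussianReal 0 r] = r := variance_id_gaussianReal
  rw [variance_of_integral_eq_zero aemeasurable_id (integral_id_gaussianReal)] at var_eq
  exact NNReal.coe_eq_one.1 (var_eq.symm.trans h)

variable [DecidableEq ι]

lemma eq_pi_gaussianReal_of_map_eq_gaussianReal
    (hgauss : ∀ l : (ι → ℝ) →ₗ[ℝ] ℝ, ∃ r : NNReal, γ.map l = gaussianReal 0 r)
    (hcov : ∀ i j, ∫ z, z i * z j ∂γ = if i = j then (1 : ℝ) else 0) :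
    γ = Measure.pi fun _ ↦ gaussianReal 0 1 := by
  have isGaussian : IsGaussian γ := isGaussian_of_map_eq_gaussianReal fun l ↦
    let ⟨r, hr⟩ := hgauss l
    ⟨0, r, hr⟩
  have map_eval (i : ι) : γ.map (fun z ↦ z i) = gaussianReal 0 1 := by
    obtain ⟨r, hr : γ.map (fun z ↦ z i) = gaussianReal 0 r⟩ := hgauss (LinearMap.proj i)
    have integral_sq : ∫ x, x ^ 2 ∂gaussianReal 0 r = 1 := by
      rw [← hr, integral_map (measurable_pi_apply i).aemeasurable (by fun_prop)]
      simpa only [sq, if_true] using hcov i i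
    rw [hr, eq_gaussianReal_zero_one_of_integral_sq_eq_one integral_sq]
  have integral_eval (i : ι) : ∫ z, z i ∂γ = 0 := by
    rw [← integral_map (φ := fun z : ι → ℝ ↦ z i) (f := fun x ↦ x)
      (measurable_pi_apply i).aemeasurable (by fun_prop), map_eval, integral_id_gaussianReal]
  have memLp_eval (i : ι) : MemLp (fun z ↦ z i) 2 γ :=
    IsGaussian.memLp_dual γ (ContinuousLinearMap.proj (R := ℝ) (φ := fun _ : ι ↦ ℝ) i) 2
      ENNReal.ofNat_ne_top
  have covariance_eval : Pairwise fun i j ↦ cov[fun z ↦ z i, fun z ↦ z j; γ] = 0 := by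
    intro i j hij
    rw [covariance_eq_sub (memLp_eval i) (memLp_eval j), integral_eval, zero_mul, sub_zero]
    exact (hcov i j).trans (if_neg hij)
  rw [eq_pi_map_eval_of_isGaussian covariance_eval]
  simp only [map_eval]

end GaussianLaw

section SupSum

variable {E ι Y : Type*} [AddCommGroup E] [Nonempty Y] {a : ι → E → ℝ} {C : ℝ}

lemma iSup_abs_mul_sub_translate_le (ha : ∀ i x, |a i x| ≤ C) {c : ℝ} (hc : 0 ≤ c) (e w : E)
    (u : Y → E) (i : ι) :
    ⨆ y, |c * (a i (w + u y - e) - a i (w + u y))| ≤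
      c * ((⨆ y, |a i (w - e + u y)|) + ⨆ y, |a i (w + u y)|) := by
  have bdd (x : E) : BddAbove (Set.range fun y ↦ |a i (x + u y)|) :=
    ⟨C, Set.forall_mem_range.2 fun y ↦ ha i _⟩
  refine ciSup_le fun y ↦ ?_
  rw [abs_mul, abs_of_nonneg hc, add_sub_right_comm]
  exact mul_le_mul_of_nonneg_left ((abs_sub _ _).trans
    (add_le_add (le_ciSup (bdd (w - e)) y) (le_ciSup (bdd w) y))) hc

variable [Fintype ι]

lemma bddAbove_range_sum_iSup_abs (ha : ∀ i x, |a i x| ≤ C) (u : Y → E) :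
    BddAbove (Set.range fun w ↦ ∑ i, ⨆ y, |a i (w + u y)|) := by
  refine ⟨∑ _ : ι, C, ?_⟩
  rintro _ ⟨w, rfl⟩
  exact Finset.sum_le_sum fun i _ ↦ ciSup_le fun y ↦ ha i _

lemma sum_iSup_abs_mul_sub_translate_le (ha : ∀ i x, |a i x| ≤ C) {c : ℝ} (hc : 0 ≤ c) (e w : E)
    (u : Y → E) :
    ∑ i, ⨆ y, |c * (a i (w + u y - e) - a i (w + u y))| ≤
      2 * c * ⨆ w', ∑ i, ⨆ y, |a i (w' + u y)| := by
  let S (x : E) : ℝ := ∑ i, ⨆ y, |a i (x + u y)|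
  have S_le_iSup (x : E) : S x ≤ ⨆ w', S w' := le_ciSup (bddAbove_range_sum_iSup_abs ha u) x
  calc ∑ i, ⨆ y, |c * (a i (w + u y - e) - a i (w + u y))|
      ≤ ∑ i, c * ((⨆ y, |a i (w - e + u y)|) + ⨆ y, |a i (w + u y)|) :=
        Finset.sum_le_sum fun i _ ↦ iSup_abs_mul_sub_translate_le ha hc e w u i
    _ = c * (S (w - e) + S w) := by rw [← Finset.mul_sum, Finset.sum_add_distrib]
    _ ≤ c * ((⨆ w', S w') + ⨆ w', S w') :=
        mul_le_mul_of_nonneg_left (add_le_add (S_le_iSup _) (S_le_iSup _)) hc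
    _ = 2 * c * ⨆ w', S w' := by ring

end SupSum

theorem stmt17_general (d : ℕ) (hd : 0 < d) (η : ℝ) (hη : 0 ≤ η) (φ : ℝ) (hφ : 0 < φ)
    (γ : Measure (Fin d → ℝ))
    (hgauss : ∀ l : (Fin d → ℝ) →ₗ[ℝ] ℝ, ∃ vr : NNReal, γ.map l = gaussianReal 0 vr)
    (hcov : ∀ j k, ∫ z, z j * z k ∂γ = if j = k then (1 : ℝ) else 0)
    (v : ℕ) (hv : 1 ≤ v) (w : Fin d → ℝ) :
    ∑ J : Fin v → Fin d,
      (⨆ y : {y : Fin d → ℝ // ‖y‖ ≤ η},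
        |iteratedFDeriv ℝ v (rhoTil d φ γ) (w + y.1) (fun i ↦ Pi.single (J i) 1)|)
    ≤ 2 * φ *
      (⨆ w' : Fin d → ℝ, ∑ J : Fin v → Fin d,
        (⨆ y : {y : Fin d → ℝ // ‖y‖ ≤ η},
          |iteratedFDeriv ℝ v (Psi d) (w' + y.1) (fun i ↦ Pi.single (J i) 1)|)) := by
  have : Nonempty (Fin d) := ⟨⟨0, hd⟩⟩
  have : Nonempty {y : Fin d → ℝ // ‖y‖ ≤ η} := ⟨⟨0, by rwa [norm_zero]⟩⟩
  obtain ⟨C, hC⟩ := exists_abs_iteratedFDeriv_Psi_single_le (d := d) hv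
  obtain rfl := eq_pi_gaussianReal_of_map_eq_gaussianReal hgauss hcov
  simp only [iteratedFDeriv_rhoTil_pi_gaussianReal hφ, smul_apply,
    sub_apply, smul_eq_mul]
  exact sum_iSup_abs_mul_sub_translate_le hC hφ.le (fun _ ↦ 1 / φ) w Subtype.val

/-- with η = K/√(log d) (d ≥ 3, K > 0), for every v ≥ 1,
sup_w Σ_{j_1…j_v} sup_{‖y‖_∞≤η} |∂_{j_1…j_v} ρ̃(w+y)|
  ≤ 2φ sup_w Σ_{j_1…j_v} sup_{‖y‖_∞≤η} |∂_{j_1…j_v} Ψ(w+y)|. -/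
theorem stmt17 (d : ℕ) (hd : 3 ≤ d) (K : ℝ) (hK : 0 < K) (φ : ℝ) (hφ : 0 < φ)
    (γ : Measure (Fin d → ℝ)) [IsProbabilityMeasure γ]
    (hgauss : ∀ l : (Fin d → ℝ) →ₗ[ℝ] ℝ, ∃ vr : NNReal, γ.map l = gaussianReal 0 vr)
    (hcov : ∀ j k, ∫ z, z j * z k ∂γ = if j = k then (1 : ℝ) else 0)
    (v : ℕ) (hv : 1 ≤ v) :
    ∀ w : Fin d → ℝ,
      ∑ J : Fin v → Fin d,
        (⨆ y : {y : Fin d → ℝ // ‖y‖ ≤ K / Real.sqrt (Real.log d)},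
          |iteratedFDeriv ℝ v (rhoTil d φ γ) (w + y.1) (fun i => Pi.single (J i) 1)|)
      ≤ 2 * φ *
        (⨆ w' : Fin d → ℝ, ∑ J : Fin v → Fin d,
          (⨆ y : {y : Fin d → ℝ // ‖y‖ ≤ K / Real.sqrt (Real.log d)},
            |iteratedFDeriv ℝ v (Psi d) (w' + y.1) (fun i => Pi.single (J i) 1)|)) := by
  exact stmt17_general d (by omega) _ (by positivity) φ hφ γ hgauss hcov v hv
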